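/- The operators b_+ and b_− on V_α⊗ℂ² are complementary idempotent U_q(sl_2)-intertwiners: b_+ + b_− = Id; b_+² = b_+ and b_−² = b_−; and b_± commute with the coproduct actions Δ(E), Δ(F), and Δ(K^{±1}) on V_α⊗ℂ². -/

import Mathlib

noncomputable section

/-- The Verma module `V_α`: finitely supported complex sequences, basis `|n⟩`. -/
abbrev Verma : Type := ℕ →₀ ℂ

/-- The basis vector `|n⟩`. -/
noncomputable def ket (n : ℕ) : Verma := Finsupp.single n 1

/-- The linear operator on `Verma` determined by its values on the basis vectors. -/
noncomputable def ladderOp (t : ℕ → Verma) : Module.End ℂ Verma :=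
  Finsupp.lsum ℂ fun n => LinearMap.toSpanSingleton ℂ Verma (t n)

/-- The q-deformed number `[x]_q` with `q = e^h`. -/
noncomputable def qnum (h x : ℂ) : ℂ :=
  (Complex.exp (h * x) - Complex.exp (-(h * x))) / (Complex.exp h - Complex.exp (-h))

/-- `E |n⟩ = [n]_q [α−n]_q |n−1⟩`, `E |0⟩ = 0`. -/
noncomputable def Eop (h α : ℂ) : Module.End ℂ Verma :=
  ladderOp fun n => if n = 0 then 0 else (qnum h n * qnum h (α - n)) • ket (n - 1)

/-- `F |n⟩ = |n+1⟩`. -/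
noncomputable def Fop : Module.End ℂ Verma := ladderOp fun n => ket (n + 1)

/-- `K |n⟩ = q^{α−1−2n} |n⟩`. -/
noncomputable def Kop (h α : ℂ) : Module.End ℂ Verma :=
  ladderOp fun n => Complex.exp (h * (α - 1 - 2 * n)) • ket n

/-- `K⁻¹ |n⟩ = q^{−(α−1−2n)} |n⟩`. -/
noncomputable def Kinv (h α : ℂ) : Module.End ℂ Verma :=
  ladderOp fun n => Complex.exp (-(h * (α - 1 - 2 * n))) • ket n

/-- Operators on `V_α ⊗ ℂ²` as 2×2 matrices with entries in `End(V_α)`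
(rows/columns indexed by the `ℂ²` basis `↑, ↓`). -/
abbrev Op2 : Type := Matrix (Fin 2) (Fin 2) (Module.End ℂ Verma)

/-- The projector `b_+` on the summand `V_{α+1}` of `V_α ⊗ ℂ²`. -/
noncomputable def bPlus (h α : ℂ) : Op2 :=
  (Complex.exp (h * α) - Complex.exp (-(h * α)))⁻¹ •
    !![(-Complex.exp (-h)) • Kinv h α + Complex.exp (h * α) • 1,
        (Complex.exp h - Complex.exp (-h)) • Fop;
        (Complex.exp h * (Complex.exp h - Complex.exp (-h))) • (Kinv h α * Eop h α),
        Complex.exp h • Kinv h α - Complex.exp (-(h * α)) • 1]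

/-- The projector `b_−` on the summand `V_{α-1}` of `V_α ⊗ ℂ²`. -/
noncomputable def bMinus (h α : ℂ) : Op2 :=
  (-(Complex.exp (h * α) - Complex.exp (-(h * α)))⁻¹) •
    !![(-Complex.exp (-h)) • Kinv h α + Complex.exp (-(h * α)) • 1,
        (Complex.exp h - Complex.exp (-h)) • Fop;
        (Complex.exp h * (Complex.exp h - Complex.exp (-h))) • (Kinv h α * Eop h α),
        Complex.exp h • Kinv h α - Complex.exp (h * α) • 1]

/-- The coproduct action `Δ(E) = 1⊗E + E⊗K` on `V_α ⊗ ℂ²`. -/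
noncomputable def coE (h α : ℂ) : Op2 :=
  !![Complex.exp h • Eop h α, 1; 0, Complex.exp (-h) • Eop h α]

/-- The coproduct action `Δ(F) = K⁻¹⊗F + F⊗1` on `V_α ⊗ ℂ²`. -/
noncomputable def coF (h α : ℂ) : Op2 :=
  !![Fop, 0; Kinv h α, Fop]

/-- The coproduct action `Δ(K) = K⊗K` on `V_α ⊗ ℂ²`. -/
noncomputable def coK (h α : ℂ) : Op2 :=
  !![Complex.exp h • Kop h α, 0; 0, Complex.exp (-h) • Kop h α]

/-- The coproduct action `Δ(K⁻¹) = K⁻¹⊗K⁻¹` on `V_α ⊗ ℂ²`. -/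
noncomputable def coKinv (h α : ℂ) : Op2 :=
  !![Complex.exp (-h) • Kinv h α, 0; 0, Complex.exp h • Kinv h α]

theorem compl_eq {R : Type*} [Ring R] {b c : R} (H : b + c = 1) : c = 1 - b := by
  rw [← H]; simp

theorem compl_idem {R : Type*} [Ring R] {b : R} (H : b * b = b) :
    (1 - b) * (1 - b) = 1 - b := by
  rw [sub_mul, mul_sub, mul_sub, H]; simp

theorem compl_comm {R : Type*} [Ring R] {b c : R} (H : b * c = c * b) :
    (1 - b) * c = c * (1 - b) := by
  rw [sub_mul, mul_sub, H]; simp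

theorem ladderOp_ket (t : ℕ → Verma) (n : ℕ) : ladderOp t (ket n) = t n := by
  simp [ladderOp, ket]

theorem exp_nat_mul_h (h : ℂ) (n : ℕ) : Complex.exp (h * n) = Complex.exp h ^ n := by
  rw [mul_comm, Complex.exp_nat_mul]

theorem Fop_ket (n : ℕ) : Fop (ket n) = ket (n + 1) := ladderOp_ket _ n

theorem Kop_ket (h α : ℂ) (n : ℕ) : Kop h α (ket n) =
    (Complex.exp (h * α) * (Complex.exp h ^ (2 * n + 1))⁻¹) • ket n := by
  rw [Kop, ladderOp_ket, ← exp_nat_mul_h, ← Complex.exp_neg, ← Complex.exp_add]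
  congr 2
  push_cast
  ring

theorem Kinv_ket (h α : ℂ) (n : ℕ) : Kinv h α (ket n) =
    (Complex.exp h ^ (2 * n + 1) * (Complex.exp (h * α))⁻¹) • ket n := by
  rw [Kinv, ladderOp_ket, ← exp_nat_mul_h, ← Complex.exp_neg, ← Complex.exp_add]
  congr 2
  push_cast
  ring

theorem Eop_ket_zero (h α : ℂ) : Eop h α (ket 0) = 0 := by
  rw [Eop, ladderOp_ket, if_pos rfl]

theorem Eop_ket_succ (h α : ℂ) (n : ℕ) : Eop h α (ket (n + 1)) =
    (((Complex.exp h ^ (n + 1) - (Complex.exp h ^ (n + 1))⁻¹) /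
        (Complex.exp h - (Complex.exp h)⁻¹)) *
      ((Complex.exp (h * α) * (Complex.exp h ^ (n + 1))⁻¹ -
        Complex.exp h ^ (n + 1) * (Complex.exp (h * α))⁻¹) /
        (Complex.exp h - (Complex.exp h)⁻¹))) • ket n := by
  rw [Eop, ladderOp_ket, if_neg (Nat.succ_ne_zero n)]
  have h1 : h * (α - ((n + 1 : ℕ) : ℂ)) = h * α + -(h * ((n + 1 : ℕ) : ℂ)) := by ring
  simp only [qnum, h1, neg_add, neg_neg, Complex.exp_add, Complex.exp_neg, exp_nat_mul_h,
    Nat.add_sub_cancel]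
  congr 3
  ring

theorem end_ext {A B : Module.End ℂ Verma} (H : ∀ n, A (ket n) = B (ket n)) : A = B := by
  apply Finsupp.lhom_ext'
  intro n
  apply LinearMap.ext_ring
  exact H n

theorem ne_aux {x : ℂ} (h0 : x ≠ 0) (h : x ^ 2 ≠ 1) : x - x⁻¹ ≠ 0 := by
  intro H
  apply h
  field_simp at H
  linear_combination H

theorem sum_eq_one (h α : ℂ) (hα : Complex.exp (h * α) ≠ Complex.exp (-(h * α))) :
    bPlus h α + bMinus h α = 1 := by
  have hd := sub_ne_zero.mpr hα
  apply Matrix.ext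
  intro i j
  fin_cases i <;> fin_cases j <;>
    simp [bPlus, bMinus] <;> match_scalars <;> field_simp <;> ring

set_option maxHeartbeats 1000000 in
theorem bPlus_idem (h α : ℂ) (hq : Complex.exp h ^ 2 ≠ 1)
    (hα : Complex.exp (h * α) ≠ Complex.exp (-(h * α))) :
    bPlus h α * bPlus h α = bPlus h α := by
  have hx := Complex.exp_ne_zero h
  have hy := Complex.exp_ne_zero (h * α)
  have hx2 := sub_ne_zero.mpr hq
  have hd := ne_aux hx hq
  have hy2 : Complex.exp (h * α) ^ 2 - 1 ≠ 0 := by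
    intro H
    apply hα
    rw [Complex.exp_neg]
    field_simp
    linear_combination H
  apply Matrix.ext
  intro i j
  apply end_ext
  intro n
  fin_cases i <;> fin_cases j <;> rcases n with _ | n <;>
    simp [bPlus, Matrix.mul_apply, Fin.sum_univ_two, Fop_ket, Kop_ket, Kinv_ket,
      Eop_ket_zero, Eop_ket_succ, smul_smul, Complex.exp_neg] <;>
    match_scalars <;> field_simp <;> ring

set_option maxHeartbeats 1000000 in
theorem bPlus_E (h α : ℂ) (hq : Complex.exp h ^ 2 ≠ 1)
    (hα : Complex.exp (h * α) ≠ Complex.exp (-(h * α))) :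
    bPlus h α * coE h α = coE h α * bPlus h α := by
  have hx := Complex.exp_ne_zero h
  have hy := Complex.exp_ne_zero (h * α)
  have hx2 := sub_ne_zero.mpr hq
  have hd := ne_aux hx hq
  have hy2 : Complex.exp (h * α) ^ 2 - 1 ≠ 0 := by
    intro H
    apply hα
    rw [Complex.exp_neg]
    field_simp
    linear_combination H
  apply Matrix.ext
  intro i j
  apply end_ext
  intro n
  fin_cases i <;> fin_cases j <;> rcases n with _ | _ | n <;>
    simp [bPlus, coE, Matrix.mul_apply, Fin.sum_univ_two, Fop_ket, Kop_ket, Kinv_ket,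
      Eop_ket_zero, Eop_ket_succ, smul_smul, Complex.exp_neg] <;>
    match_scalars <;> field_simp <;> ring

set_option maxHeartbeats 1000000 in
theorem bPlus_F (h α : ℂ) (hq : Complex.exp h ^ 2 ≠ 1)
    (hα : Complex.exp (h * α) ≠ Complex.exp (-(h * α))) :
    bPlus h α * coF h α = coF h α * bPlus h α := by
  have hx := Complex.exp_ne_zero h
  have hy := Complex.exp_ne_zero (h * α)
  have hx2 := sub_ne_zero.mpr hq
  have hd := ne_aux hx hq
  have hy2 : Complex.exp (h * α) ^ 2 - 1 ≠ 0 := by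
    intro H
    apply hα
    rw [Complex.exp_neg]
    field_simp
    linear_combination H
  apply Matrix.ext
  intro i j
  apply end_ext
  intro n
  fin_cases i <;> fin_cases j <;> rcases n with _ | n <;>
    simp [bPlus, coF, Matrix.mul_apply, Fin.sum_univ_two, Fop_ket, Kop_ket, Kinv_ket,
      Eop_ket_zero, Eop_ket_succ, smul_smul, Complex.exp_neg] <;>
    match_scalars <;> field_simp <;> ring

set_option maxHeartbeats 1000000 in
theorem bPlus_K (h α : ℂ) (hq : Complex.exp h ^ 2 ≠ 1)
    (hα : Complex.exp (h * α) ≠ Complex.exp (-(h * α))) :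
    bPlus h α * coK h α = coK h α * bPlus h α := by
  have hx := Complex.exp_ne_zero h
  have hy := Complex.exp_ne_zero (h * α)
  have hx2 := sub_ne_zero.mpr hq
  have hd := ne_aux hx hq
  have hy2 : Complex.exp (h * α) ^ 2 - 1 ≠ 0 := by
    intro H
    apply hα
    rw [Complex.exp_neg]
    field_simp
    linear_combination H
  apply Matrix.ext
  intro i j
  apply end_ext
  intro n
  fin_cases i <;> fin_cases j <;> rcases n with _ | n <;>
    simp [bPlus, coK, Matrix.mul_apply, Fin.sum_univ_two, Fop_ket, Kop_ket, Kinv_ket,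
      Eop_ket_zero, Eop_ket_succ, smul_smul, Complex.exp_neg] <;>
    match_scalars <;> field_simp <;> ring

set_option maxHeartbeats 1000000 in
theorem bPlus_Kinv (h α : ℂ) (hq : Complex.exp h ^ 2 ≠ 1)
    (hα : Complex.exp (h * α) ≠ Complex.exp (-(h * α))) :
    bPlus h α * coKinv h α = coKinv h α * bPlus h α := by
  have hx := Complex.exp_ne_zero h
  have hy := Complex.exp_ne_zero (h * α)
  have hx2 := sub_ne_zero.mpr hq
  have hd := ne_aux hx hq
  have hy2 : Complex.exp (h * α) ^ 2 - 1 ≠ 0 := by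
    intro H
    apply hα
    rw [Complex.exp_neg]
    field_simp
    linear_combination H
  apply Matrix.ext
  intro i j
  apply end_ext
  intro n
  fin_cases i <;> fin_cases j <;> rcases n with _ | n <;>
    simp [bPlus, coKinv, Matrix.mul_apply, Fin.sum_univ_two, Fop_ket, Kop_ket, Kinv_ket,
      Eop_ket_zero, Eop_ket_succ, smul_smul, Complex.exp_neg] <;>
    match_scalars <;> field_simp <;> ring

/-- `b_+` and `b_−` are complementary idempotent `U_q(sl_2)`-intertwiners on
`V_α ⊗ ℂ²`. -/
theorem bPlus_bMinus_idempotent_intertwiners (h α : ℂ) (hq : Complex.exp h ^ 2 ≠ 1)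
    (hα : Complex.exp (h * α) ≠ Complex.exp (-(h * α))) :
    bPlus h α + bMinus h α = 1 ∧
    bPlus h α * bPlus h α = bPlus h α ∧
    bMinus h α * bMinus h α = bMinus h α ∧
    bPlus h α * coE h α = coE h α * bPlus h α ∧
    bPlus h α * coF h α = coF h α * bPlus h α ∧
    bPlus h α * coK h α = coK h α * bPlus h α ∧
    bPlus h α * coKinv h α = coKinv h α * bPlus h α ∧
    bMinus h α * coE h α = coE h α * bMinus h α ∧
    bMinus h α * coF h α = coF h α * bMinus h α ∧
    bMinus h α * coK h α = coK h α * bMinus h α ∧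
    bMinus h α * coKinv h α = coKinv h α * bMinus h α := by
  have hs := sum_eq_one h α hα
  have hm : bMinus h α = 1 - bPlus h α := compl_eq (R := Op2) hs
  have h0 := bPlus_idem h α hq hα
  have hE := bPlus_E h α hq hα
  have hF := bPlus_F h α hq hα
  have hK := bPlus_K h α hq hα
  have hKi := bPlus_Kinv h α hq hα
  refine ⟨hs, h0, ?_, hE, hF, hK, hKi, ?_, ?_, ?_, ?_⟩ <;> rw [hm]
  · exact compl_idem (R := Op2) h0
  · exact compl_comm (R := Op2) hE
  · exact compl_comm (R := Op2) hF
  · exact compl_comm (R := Op2) hK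
  · exact compl_comm (R := Op2) hKi
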